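/- Let T be a tree with p ≥ 3 pendant vertices, and let u1, u2, u3 be three distinct pendant vertices of T. Let H be the unique minimal subtree of T containing all three of these vertices, i.e., H is the union of the paths P_{u_i,u_j} for 1 ≤ i < j ≤ 3. If m(T,1) ≥ p − 2, then m(H,1) ≥ 1, where m(H,1) is the multiplicity of 1 as an eigenvalue of the Laplacian matrix of H regarded as a graph in its own right. -/

import Mathlib

/-!
The space of Laplacian eigenvectors of `T` for the eigenvalue `1` has dimension at least `p - 2`,
so it contains a nonzero `x` vanishing at the `p - 3` pendant vertices other than `u₁, u₂, u₃`
(`exists_eigenvector_vanishing`). Root `T` at `u₁`. A vertex outside `H` has only children outside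
`H` (`mem_hull_of_child`), so each branch of `T` hanging off `H` ends in pendant vertices where `x`
vanishes. If `x` vanishes at a vertex and at all its children, the eigenvalue equation there forces
`x` to vanish at the parent; climbing up, `x` vanishes on the whole branch and at the vertex of `H`
to which the branch is attached (`vanish_off_hull`). Hence the edges between `H` and its complement
contribute nothing to the eigenvalue equations, and the restriction of `x` to `H` is a nonzero
eigenvector of `H` for the eigenvalue `1`.
-/

open SimpleGraph Matrix

variable {V : Type*}

/-- A pendant vertex: a vertex of degree one. -/
def IsPendant (G : SimpleGraph V) (v : V) : Prop := (G.neighborSet v).ncard = 1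

/-- A major vertex: a vertex of degree at least three. -/
def IsMajor (G : SimpleGraph V) (v : V) : Prop := 3 ≤ (G.neighborSet v).ncard

/-- `v` lies on the (unique, in a tree) path between `u` and `w`. -/
def OnPath (G : SimpleGraph V) (u w v : V) : Prop :=
  G.dist u v + G.dist v w = G.dist u w

/-- The number of pendant vertices of a graph. -/
noncomputable def numPendant (G : SimpleGraph V) : ℕ :=
  Nat.card {v : V // IsPendant G v}

/-- The Laplacian matrix `D - A` over `ℝ`. -/
noncomputable def lapMat [Fintype V] (G : SimpleGraph V) : Matrix V V ℝ :=
  letI := Classical.decEq V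
  letI : DecidableRel G.Adj := Classical.decRel _
  G.lapMatrix ℝ

/-- The signless Laplacian matrix `D + A` over `ℝ`. -/
noncomputable def signlessLapMat [Fintype V] (G : SimpleGraph V) : Matrix V V ℝ :=
  letI := Classical.decEq V
  letI : DecidableRel G.Adj := Classical.decRel _
  G.degMatrix ℝ + G.adjMatrix ℝ

/-- The multiplicity of `μ` as an eigenvalue of the Laplacian matrix of `G`. -/
noncomputable def lapMult [Finite V] (G : SimpleGraph V) (μ : ℝ) : ℕ :=
  letI := Fintype.ofFinite V
  letI := Classical.decEq V
  Module.finrank ℝ (Module.End.eigenspace (Matrix.toLin' (lapMat G)) μ)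

/-- `μ` is an eigenvalue of the Laplacian matrix of `G`. -/
def HasLapEigen [Finite V] (G : SimpleGraph V) (μ : ℝ) : Prop :=
  letI := Fintype.ofFinite V
  ∃ x : V → ℝ, x ≠ 0 ∧ lapMat G *ᵥ x = μ • x

/-- Membership in the class `𝒬`: a tree in which any two distinct pendant vertices are
at distance `≡ 2 (mod 3)`. -/
def InQ [Finite V] (G : SimpleGraph V) : Prop :=
  G.IsTree ∧ ∀ u v : V, IsPendant G u → IsPendant G v → u ≠ v → G.dist u v % 3 = 2

/-- A node of a tree: a vertex at distance `≡ 1 (mod 3)` from every pendant vertex. -/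
def IsNode (G : SimpleGraph V) (η : V) : Prop :=
  ∀ u : V, IsPendant G u → G.dist η u % 3 = 1

/-- Membership in the class `𝒫`: a path on `n` vertices with `n ≡ 2 (mod 3)`. -/
def InP [Finite V] (G : SimpleGraph V) : Prop :=
  G.IsTree ∧ (∀ v : V, (G.neighborSet v).ncard ≤ 2) ∧ Nat.card V % 3 = 2

/-- The induced subgraph on `S` is a tree of class `𝒬` and `b ∈ S` is a node of it. -/
def NodeAttach [Finite V] (T : SimpleGraph V) (S : Set V) (b : V) : Prop :=
  ∃ hb : b ∈ S, InQ (T.induce S) ∧ IsNode (T.induce S) ⟨b, hb⟩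

/-- The induced subgraph on `S` is a path of class `𝒫` and `b ∈ S` is a pendant vertex
of it. -/
def PendantAttach [Finite V] (T : SimpleGraph V) (S : Set V) (b : V) : Prop :=
  ∃ hb : b ∈ S, InP (T.induce S) ∧ IsPendant (T.induce S) ⟨b, hb⟩

/-- The tree `T` is obtained from a tree `H` consisting of three internally disjoint
paths `P_{u j, m}` (`j = 0,1,2`) joined at `m`, whose three leg lengths satisfy `cond`,
together with trees `T i` (`i : Fin k`) of class `𝒬 ∪ 𝒫` (realized as the induced
subgraphs on the sets `S i`), by identifying for each `i` a vertex `a i` of `H`, lying on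
some `P_{u j, m}` with `d(a i, u j) ≡ 1 (mod 3)`, with a vertex `b i` of `T i` which is a
node of `T i` if `T i ∈ 𝒬` and a pendant vertex of `T i` if `T i ∈ 𝒫`. -/
def InGammaWith [Finite V] (T : SimpleGraph V) (cond : ℕ → ℕ → ℕ → Prop) : Prop :=
  ∃ (m : V) (u : Fin 3 → V) (k : ℕ) (a : Fin k → V) (S : Fin k → Set V),
    T.IsTree ∧
    Function.Injective u ∧
    (∀ j, u j ≠ m) ∧
    (∀ j j', j ≠ j' → ∀ v, OnPath T (u j) m v → OnPath T (u j') m v → v = m) ∧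
    cond (T.dist (u 0) m) (T.dist (u 1) m) (T.dist (u 2) m) ∧
    (∀ i, ∃ j, OnPath T (u j) m (a i) ∧ T.dist (a i) (u j) % 3 = 1) ∧
    (∀ i, S i ∩ {v | ∃ j, OnPath T (u j) m v} = {a i}) ∧
    (∀ i i', i ≠ i' → ∀ v ∈ S i ∩ S i', v = a i ∧ v = a i') ∧
    (∀ v, (∃ j, OnPath T (u j) m v) ∨ ∃ i, v ∈ S i) ∧
    (∀ v w, T.Adj v w →
      ((∃ j, OnPath T (u j) m v) ∧ (∃ j, OnPath T (u j) m w)) ∨ ∃ i, v ∈ S i ∧ w ∈ S i) ∧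
    (∀ i, NodeAttach T (S i) (a i) ∨ PendantAttach T (S i) (a i))

/-- The class `Γ_A`: base tree in `Ω_A`. -/
def InGammaA [Finite V] (T : SimpleGraph V) : Prop :=
  InGammaWith T (fun d₁ d₂ d₃ => d₁ % 3 = 1 ∧ d₂ % 3 = 1 ∧ d₃ % 3 ≠ 1)

/-- The class `Γ_B`: base tree in `Ω_B`. -/
def InGammaB [Finite V] (T : SimpleGraph V) : Prop :=
  InGammaWith T (fun d₁ d₂ d₃ => d₁ % 3 = 2 ∧ d₂ % 3 = 0 ∧ d₃ % 3 = 0)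

/-- The class `Γ = Γ_A ∪ Γ_B`. -/
def InGamma [Finite V] (T : SimpleGraph V) : Prop := InGammaA T ∨ InGammaB T

/-- In a tree rooted at `r`, the parent of a vertex is unique. -/
lemma parent_unique {T : SimpleGraph V} (hT : T.IsTree) {r c a b : V}
    (ha : T.Adj a c) (hb : T.Adj b c) (hda : T.dist r c = T.dist r a + 1)
    (hdb : T.dist r c = T.dist r b + 1) : a = b := by
  obtain ⟨p, hp⟩ := hT.connected.exists_walk_length_eq_dist r a
  obtain ⟨q, hq⟩ := hT.connected.exists_walk_length_eq_dist r b
  have hp' : (p.concat ha).IsPath :=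
    Walk.isPath_of_length_eq_dist _ (by rw [Walk.length_concat]; omega)
  have hq' : (q.concat hb).IsPath :=
    Walk.isPath_of_length_eq_dist _ (by rw [Walk.length_concat]; omega)
  have h := (hT.existsUnique_path r c).unique hp' hq'
  have h2 := congrArg Walk.penultimate h
  simpa using h2

lemma exists_adj_closer {T : SimpleGraph V} (hT : T.IsTree) {c y : V} (h : c ≠ y) :
    ∃ c', T.Adj c c' ∧ T.dist c y = T.dist c' y + 1 := by
  obtain ⟨p, hp⟩ := hT.connected.exists_walk_length_eq_dist c y
  cases p with
  | nil => exact absurd rfl h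
  | @cons _ c' _ hadj q =>
    refine ⟨c', hadj, ?_⟩
    have h1 := dist_le q
    have h2 := hT.connected.dist_triangle (u := c) (v := c') (w := y)
    rw [dist_eq_one_iff_adj.mpr hadj] at h2
    rw [Walk.length_cons] at hp
    omega

/-- A geodesic to `y` that starts by moving away from the root `r` keeps moving away from it. -/
lemma onPath_of_child {T : SimpleGraph V} (hT : T.IsTree) (r y : V) (n : ℕ) :
    ∀ c c' : V, T.dist c' y = n → T.Adj c c' → T.dist r c' = T.dist r c + 1 →
      T.dist c y = T.dist c' y + 1 → OnPath T r y c := by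
  induction n with
  | zero =>
    intro c c' hn _ hr hy
    obtain rfl := hT.connected.dist_eq_zero_iff.mp hn
    unfold OnPath
    omega
  | succ n ih =>
    intro c c' hn hadj hr hy
    have hne : c' ≠ y := by
      rintro rfl
      simp at hn
    obtain ⟨c'', hadj', hy'⟩ := exists_adj_closer hT hne
    have hcc : T.dist r c'' = T.dist r c' + 1 := by
      rcases hT.dist_eq_dist_add_one_of_adj r hadj' with h | h
      · obtain rfl := parent_unique hT hadj hadj'.symm hr h
        omega
      · exact h
    have := ih c' c'' (by omega) hadj' hcc hy'
    unfold OnPath at this ⊢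
    omega

lemma onPath_tripod {T : SimpleGraph V} (hT : T.IsTree) (r a b c : V) (h : OnPath T a b c) :
    OnPath T r a c ∨ OnPath T r b c := by
  by_cases hca : c = a
  · subst hca; left; simp [OnPath]
  by_cases hcb : c = b
  · subst hcb; right; simp [OnPath]
  obtain ⟨a', haa, hda⟩ := exists_adj_closer hT hca
  obtain ⟨b', hbb, hdb⟩ := exists_adj_closer hT hcb
  rcases hT.dist_eq_dist_add_one_of_adj r haa with h1 | h1
  · rcases hT.dist_eq_dist_add_one_of_adj r hbb with h2 | h2
    · exfalso
      obtain rfl := parent_unique hT haa.symm hbb.symm h1 h2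
      have h3 := hT.connected.dist_triangle (u := a) (v := a') (w := b)
      unfold OnPath at h
      rw [T.dist_comm (u := a) (v := a')] at h3
      rw [T.dist_comm (u := a) (v := c)] at h
      omega
    · exact Or.inr (onPath_of_child hT r b _ c b' rfl hbb h2 hdb)
  · exact Or.inl (onPath_of_child hT r a _ c a' rfl haa h1 hda)

/-- The union of all paths of `T` between vertices of `U`. -/
def hull (T : SimpleGraph V) (U : Set V) : Set V :=
  {w : V | ∃ a b : V, a ∈ U ∧ b ∈ U ∧ OnPath T a b w}

lemma subset_hull (T : SimpleGraph V) {U : Set V} {u : V} (hu : u ∈ U) : u ∈ hull T U :=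
  ⟨u, u, hu, hu, by simp [OnPath]⟩

/-- With the root `r` in `U`, the hull of `U` is closed under taking parents. -/
lemma mem_hull_of_child {T : SimpleGraph V} (hT : T.IsTree) {U : Set V} {r w c : V} (hr : r ∈ U)
    (hadj : T.Adj w c) (hd : T.dist r c = T.dist r w + 1) (hc : c ∈ hull T U) :
    w ∈ hull T U := by
  obtain ⟨a, b, ha, hb, hab⟩ := hc
  have key : ∀ y ∈ U, OnPath T r y c → w ∈ hull T U := by
    intro y hy h
    refine ⟨r, y, hr, hy, ?_⟩
    have h1 := hT.connected.dist_triangle (u := r) (v := w) (w := y)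
    have h2 := hT.connected.dist_triangle (u := w) (v := c) (w := y)
    rw [dist_eq_one_iff_adj.mpr hadj] at h2
    unfold OnPath at h ⊢
    omega
  rcases onPath_tripod hT r a b c hab with h | h
  · exact key a ha h
  · exact key b hb h

open Classical in
lemma lapMat_mulVec_apply [Fintype V] (G : SimpleGraph V) (x : V → ℝ) (v : V) :
    (lapMat G *ᵥ x) v = ∑ w, if G.Adj v w then x v - x w else 0 := by
  unfold lapMat
  rw [lapMatrix_mulVec_apply, ← Finset.sum_filter, Finset.sum_sub_distrib, Finset.sum_const,
    nsmul_eq_mul, ← neighborFinset_eq_filter, card_neighborFinset_eq_degree]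

open Classical in
/-- An eigenvector for the eigenvalue `1` that vanishes at all pendant vertices outside `U`
vanishes outside the hull of `U` and at the parents of the vertices outside the hull. -/
lemma vanish_off_hull [Fintype V] {T : SimpleGraph V} (hT : T.IsTree) {U : Set V} {r : V}
    (hr : r ∈ U) (x : V → ℝ)
    (hx : ∀ v, (∑ w, if T.Adj v w then x v - x w else 0) = x v)
    (hpend : ∀ u, IsPendant T u → u ∉ U → x u = 0) :
    ∀ w, w ∉ hull T U → x w = 0 ∧ ∀ z, T.Adj w z → T.dist r w = T.dist r z + 1 → x z = 0 := by
  -- Descending induction on the depth of `w`, which is bounded because `T` is finite.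
  obtain ⟨N, hN⟩ : ∃ N, ∀ v, T.dist r v ≤ N :=
    ⟨Finset.univ.sup (T.dist r), fun v => Finset.le_sup (f := T.dist r) (Finset.mem_univ v)⟩
  suffices H : ∀ n w, N + 1 - T.dist r w = n → w ∉ hull T U →
      x w = 0 ∧ ∀ z, T.Adj w z → T.dist r w = T.dist r z + 1 → x z = 0 from
    fun w => H _ w rfl
  intro n
  induction n using Nat.strong_induction_on with
  | _ n ih =>
  intro w hn hw
  have hchild : ∀ c, T.Adj w c → T.dist r c = T.dist r w + 1 →
      x c = 0 ∧ x w = 0 := by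
    intro c hadj hd
    have hc : c ∉ hull T U := fun h => hw (mem_hull_of_child hT hr hadj hd h)
    have h1 := hN w
    have h2 := ih (N + 1 - T.dist r c) (by omega) c rfl hc
    exact ⟨h2.1, h2.2 w hadj.symm hd⟩
  have hwr : w ≠ r := fun h => hw (h ▸ subset_hull T hr)
  obtain ⟨z, hz, hzd⟩ := exists_adj_closer hT hwr
  rw [T.dist_comm (u := w), T.dist_comm (u := z)] at hzd
  have huniq : ∀ z', T.Adj w z' → T.dist r w = T.dist r z' + 1 → z' = z :=
    fun z' h h' => parent_unique hT h.symm hz.symm h' hzd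
  have hxw : x w = 0 := by
    by_cases hex : ∃ c, T.Adj w c ∧ T.dist r c = T.dist r w + 1
    · obtain ⟨c, hc, hd⟩ := hex
      exact (hchild c hc hd).2
    · refine hpend w ?_ fun h => hw (subset_hull T h)
      rw [IsPendant, Set.ncard_eq_one]
      refine ⟨z, Set.ext fun y => ⟨fun hy => ?_, ?_⟩⟩
      · rcases hT.dist_eq_dist_add_one_of_adj r hy with h | h
        · exact huniq y hy h
        · exact absurd ⟨y, hy, h⟩ hex
      · rintro rfl
        exact hz
  refine ⟨hxw, fun z' h h' => ?_⟩
  rw [huniq z' h h']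
  have heq := hx w
  -- Only the parent `z` contributes to the eigenvalue equation at `w`.
  rw [Finset.sum_eq_single z, if_pos hz, hxw] at heq
  · linarith
  · intro y _ hyz
    split_ifs with hy
    · rcases hT.dist_eq_dist_add_one_of_adj r hy with h | h
      · exact absurd (huniq y hy h) hyz
      · rw [hxw, (hchild y hy h).1, sub_zero]
    · rfl
  · intro h
    exact absurd (Finset.mem_univ z) h

/-- Vanishing at each of the pendant vertices outside `U` is one linear condition, so there is a
nonzero solution once the multiplicity exceeds their number. -/
lemma exists_eigenvector_vanishing [Fintype V] [DecidableEq V] (T : SimpleGraph V) (U : Set V)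
    (h : Nat.card {v : V // IsPendant T v ∧ v ∉ U} <
      Module.finrank ℝ (Module.End.eigenspace (Matrix.toLin' (lapMat T)) 1)) :
    ∃ x : V → ℝ, x ≠ 0 ∧ lapMat T *ᵥ x = x ∧ ∀ u, IsPendant T u → u ∉ U → x u = 0 := by
  classical
  let f : Module.End.eigenspace (Matrix.toLin' (lapMat T)) (1 : ℝ) →ₗ[ℝ]
      ({v : V // IsPendant T v ∧ v ∉ U} → ℝ) :=
    (LinearMap.funLeft ℝ ℝ Subtype.val) ∘ₗ (Submodule.subtype _)
  have hf : LinearMap.ker f ≠ ⊥ := by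
    apply LinearMap.ker_ne_bot_of_finrank_lt
    rwa [Module.finrank_fintype_fun_eq_card, ← Nat.card_eq_fintype_card]
  obtain ⟨y, hy, hy0⟩ := Submodule.exists_mem_ne_zero_of_ne_bot hf
  refine ⟨y.1, fun h0 => hy0 (Subtype.ext h0), ?_, fun u hu huU => ?_⟩
  · have := Module.End.mem_eigenspace_iff.mp y.2
    simpa using this
  · exact congrFun (LinearMap.mem_ker.mp hy) ⟨u, hu, huU⟩

lemma one_le_lapMult [Finite V] (G : SimpleGraph V)
    (h : letI := Fintype.ofFinite V; ∃ x : V → ℝ, x ≠ 0 ∧ lapMat G *ᵥ x = x) :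
    1 ≤ lapMult G 1 := by
  let := Fintype.ofFinite V
  let := Classical.decEq V
  obtain ⟨x, hx0, hx⟩ := h
  unfold lapMult
  rw [Nat.one_le_iff_ne_zero, Ne, Submodule.finrank_eq_zero]
  refine (Submodule.ne_bot_iff _).mpr ⟨x, ?_, hx0⟩
  rw [Module.End.mem_eigenspace_iff]
  simpa using hx

lemma card_pendant_add_three [Finite V] (T : SimpleGraph V) {u₁ u₂ u₃ : V}
    (h12 : u₁ ≠ u₂) (h13 : u₁ ≠ u₃) (h23 : u₂ ≠ u₃)
    (h₁ : IsPendant T u₁) (h₂ : IsPendant T u₂) (h₃ : IsPendant T u₃) :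
    Nat.card {v : V // IsPendant T v ∧ v ∉ ({u₁, u₂, u₃} : Set V)} + 3 = numPendant T := by
  have hsub : ({u₁, u₂, u₃} : Set V) ⊆ {v | IsPendant T v} := by
    rintro v (rfl | rfl | rfl) <;> assumption
  have h3 : ({u₁, u₂, u₃} : Set V).ncard = 3 := Set.ncard_eq_three.mpr ⟨_, _, _, h12, h13, h23, rfl⟩
  have h := Set.ncard_sdiff_add_ncard_of_subset hsub
  rw [h3] at h
  exact h

open Classical in
/-- Passing to `S` preserves the eigenvalue equation if `x` vanishes outside `S` and at every
vertex of `S` with a neighbour outside `S`. -/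
lemma lapMat_induce_mulVec [Fintype V] (T : SimpleGraph V) (S : Set V) {_ : Fintype S} (x : V → ℝ)
    (hx : lapMat T *ᵥ x = x) (hoff : ∀ w ∉ S, x w = 0)
    (hbd : ∀ v ∈ S, ∀ w ∉ S, T.Adj v w → x v = 0) :
    lapMat (T.induce S) *ᵥ (fun v : S => x v) = fun v : S => x v := by
  funext v
  rw [lapMat_mulVec_apply]
  refine Eq.trans ?_ (congrFun hx v)
  rw [lapMat_mulVec_apply]
  have hzero : ∀ w ∉ S, (if T.Adj v w then x v - x w else 0) = 0 := by
    intro w hw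
    split_ifs with hadj
    · rw [hbd v v.2 w hw hadj, hoff w hw, sub_zero]
    · rfl
  rw [← Finset.sum_subset (Finset.subset_univ S.toFinset)
    (fun w _ hw => hzero w (by simpa using hw)),
    Finset.sum_subtype S.toFinset (p := (· ∈ S)) (fun w => Set.mem_toFinset)]
  rfl

/-- Let `T` be a tree with `p ≥ 3` pendant vertices, and let
`u₁, u₂, u₃` be three distinct pendant vertices of `T`. Let `H` be the unique minimal
subtree of `T` containing all three of these vertices, i.e. the union of the paths
`P_{uᵢ,uⱼ}`. If `m(T,1) ≥ p - 2`, then `m(H,1) ≥ 1`. -/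
theorem stmt_7 {V : Type*} [Finite V] (T : SimpleGraph V) (hT : T.IsTree)
    (p : ℕ) (hp : p = numPendant T) (hp3 : 3 ≤ p)
    (u₁ u₂ u₃ : V) (hdist : List.Pairwise (· ≠ ·) [u₁, u₂, u₃])
    (h₁ : IsPendant T u₁) (h₂ : IsPendant T u₂) (h₃ : IsPendant T u₃)
    (hmult : p - 2 ≤ lapMult T 1) :
    1 ≤ lapMult (T.induce {w : V | ∃ a b : V, a ∈ ({u₁, u₂, u₃} : Set V) ∧
      b ∈ ({u₁, u₂, u₃} : Set V) ∧ OnPath T a b w}) 1 := by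
  let := Fintype.ofFinite V
  simp only [List.pairwise_cons, List.mem_cons, List.not_mem_nil, or_false, forall_eq_or_imp,
    forall_eq] at hdist
  obtain ⟨⟨h12, h13⟩, h23, -⟩ := hdist
  have hcard := card_pendant_add_three T h12 h13 h23 h₁ h₂ h₃
  classical
  obtain ⟨x, hx0, hx, hpend⟩ := exists_eigenvector_vanishing T {u₁, u₂, u₃} (by
    have : lapMult T 1 = Module.finrank ℝ
        (Module.End.eigenspace (Matrix.toLin' (lapMat T)) 1) := by
      unfold lapMult
      congr!
    omega)
  have hoff := vanish_off_hull hT (U := {u₁, u₂, u₃}) (r := u₁) (by simp) x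
    (fun v => by rw [← lapMat_mulVec_apply, hx]) hpend
  apply one_le_lapMult
  change ∃ y : hull T {u₁, u₂, u₃} → ℝ, _
  refine ⟨fun v => x v, fun h0 => hx0 (funext fun v => ?_), ?_⟩
  · by_cases hv : v ∈ hull T {u₁, u₂, u₃}
    · exact congrFun h0 ⟨v, hv⟩
    · exact (hoff v hv).1
  · refine lapMat_induce_mulVec T _ x hx (fun w hw => (hoff w hw).1) fun v hv w hw hadj => ?_
    rcases hT.dist_eq_dist_add_one_of_adj u₁ hadj with h | h
    · exact absurd (mem_hull_of_child hT (by simp) hadj.symm h hv) hw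
    · exact (hoff w hw).2 v hadj.symm h
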